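/- 2-relative entropy is lower semicontinuous. Precisely: fix finite sets X, Y, X', Y', functions μ : X → X' and ν : Y → Y', a channel f : X ⇝ Y, and a channel f' : X' ⇝ Y' with ν∘f = f'∘μ. Let (p_n) be a sequence of probability distributions on X converging pointwise to p, let (s_n) be stochastic sections of μ converging pointwise to a stochastic section s of μ, and let (t_n) be stochastic sections of ν converging pointwise to a stochastic section t of ν. Then D(p, s∘μ∘p) + ∑_{x∈X} p_x D(f^x, (t∘f'∘μ)^x) ≤ liminf_{n→∞} [ D(p_n, s_n∘μ∘p_n) + ∑_{x∈X} (p_n)_x D(f^x, (t_n∘f'∘μ)^x) ], as an inequality in [0,∞]. -/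

import Mathlib

open scoped ENNReal BigOperators

/-- A probability distribution on a finite set `X`. -/
def IsDist {X : Type*} [Fintype X] (p : X → ℝ) : Prop :=
  (∀ x, 0 ≤ p x) ∧ ∑ x, p x = 1

/-- A channel from `X` to `Y`; `f y x` is the probability of output `y` given input `x`. -/
def IsChannel {X Y : Type*} [Fintype Y] (f : Y → X → ℝ) : Prop :=
  (∀ y x, 0 ≤ f y x) ∧ ∀ x, ∑ y, f y x = 1

/-- Composite of channels: `(g ∘ f) z x = ∑ y, g z y * f y x`. -/
noncomputable def chComp {X Y Z : Type*} [Fintype Y]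
    (g : Z → Y → ℝ) (f : Y → X → ℝ) : Z → X → ℝ :=
  fun z x => ∑ y, g z y * f y x

/-- The pure (deterministic) channel associated to a function. -/
def pureCh {X Y : Type*} [DecidableEq Y] (φ : X → Y) : Y → X → ℝ :=
  fun y x => if y = φ x then 1 else 0

/-- Pushforward of a distribution along a channel. -/
noncomputable def push {X Y : Type*} [Fintype X] (f : Y → X → ℝ) (p : X → ℝ) : Y → ℝ :=
  fun y => ∑ x, f y x * p x

/-- The identity channel. -/
def idChan {X : Type*} [DecidableEq X] : X → X → ℝ :=
  fun x x' => if x = x' then 1 else 0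

/-- `s : Y ⇝ X` is a stochastic section of `φ : X → Y` if it is a channel and `φ ∘ s = id_Y`. -/
def IsSection {X Y : Type*} [Fintype X] [Fintype Y] [DecidableEq Y]
    (φ : X → Y) (s : X → Y → ℝ) : Prop :=
  IsChannel s ∧ chComp (pureCh φ) s = idChan

open scoped Classical in
/-- Relative entropy `D(p,q) ∈ [0,∞]`, with the conventions `0·log(0/q) = 0` and
`p·log(p/0) = ∞` for `p ≠ 0`. -/
noncomputable def relEnt {X : Type*} [Fintype X] (p q : X → ℝ) : ℝ≥0∞ :=
  if ∀ x, p x ≠ 0 → q x ≠ 0 then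
    ENNReal.ofReal (∑ x, if p x = 0 then 0 else p x * Real.log (p x / q x))
  else ⊤

open Filter Topology in
noncomputable def gTerm (a b : ℝ) : ℝ≥0∞ :=
  if a ≠ 0 ∧ b = 0 then ⊤ else ENNReal.ofReal (a * Real.log a - a * Real.log b + b - a)

lemma gTerm_dual (a b c : ℝ) (ha : 0 ≤ a) (hb : 0 ≤ b) :
    ENNReal.ofReal (a * c + b - b * Real.exp c) ≤ gTerm a b := by
  unfold gTerm
  split_ifs with h
  · exact le_top
  · apply ENNReal.ofReal_le_ofReal
    rcases ha.eq_or_lt with rfl | ha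
    · simp only [zero_mul]
      nlinarith [mul_nonneg hb (Real.exp_pos c).le]
    · have hb' : 0 < b := lt_of_le_of_ne hb (fun e => h ⟨ha.ne', e.symm⟩)
      have h1 := Real.add_one_le_exp (c + Real.log b - Real.log a)
      rw [Real.exp_sub, Real.exp_add, Real.exp_log ha, Real.exp_log hb', le_div_iff₀ ha] at h1
      nlinarith

lemma gTerm_real_nonneg (a b : ℝ) (ha : 0 ≤ a) (hb : 0 ≤ b) (h : a ≠ 0 → b ≠ 0) :
    0 ≤ a * Real.log a - a * Real.log b + b - a := by
  rcases ha.eq_or_lt with rfl | ha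
  · simpa using hb
  · have hb' : 0 < b := lt_of_le_of_ne hb (h ha.ne').symm
    have h1 := Real.add_one_le_exp (Real.log b - Real.log a)
    rw [Real.exp_sub, Real.exp_log ha, Real.exp_log hb', le_div_iff₀ ha] at h1
    nlinarith

lemma relEnt_eq_sum {X : Type*} [Fintype X] (p q : X → ℝ) (hp : IsDist p) (hq : IsDist q) :
    relEnt p q = ∑ x, gTerm (p x) (q x) := by
  classical
  unfold relEnt
  split_ifs with h
  · have e : ∀ x, gTerm (p x) (q x) = ENNReal.ofReal
        (p x * Real.log (p x) - p x * Real.log (q x) + q x - p x) := by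
      intro x
      unfold gTerm
      rw [if_neg]
      rintro ⟨h1, h2⟩
      exact h x h1 h2
    simp_rw [e]
    rw [← ENNReal.ofReal_sum_of_nonneg
      (fun x _ => gTerm_real_nonneg _ _ (hp.1 x) (hq.1 x) (h x))]
    congr 1
    rw [Finset.sum_sub_distrib, Finset.sum_add_distrib, hp.2, hq.2, add_sub_cancel_right]
    refine Finset.sum_congr rfl fun x _ => ?_
    split_ifs with h0
    · simp [h0]
    · rw [Real.log_div h0 (h x h0)]; ring
  · push Not at h
    obtain ⟨x, h1, h2⟩ := h
    symm
    rw [ENNReal.sum_eq_top]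
    exact ⟨x, Finset.mem_univ _, by simp [gTerm, h1, h2]⟩

open Filter Topology in
lemma gTerm_lsc (a b : ℝ) (u v : ℕ → ℝ) (hu0 : ∀ n, 0 ≤ u n) (hv0 : ∀ n, 0 ≤ v n)
    (hu : Tendsto u atTop (𝓝 a)) (hv : Tendsto v atTop (𝓝 b)) :
    gTerm a b ≤ liminf (fun n => gTerm (u n) (v n)) atTop := by
  by_cases hb : b = 0
  · subst hb
    by_cases ha : a = 0
    · subst ha; simp [gTerm]
    have ha0 : 0 < a := lt_of_le_of_ne (ge_of_tendsto' hu hu0) (Ne.symm ha)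
    have key : ∀ r : ℝ, ENNReal.ofReal r ≤ liminf (fun n => gTerm (u n) (v n)) atTop := by
      intro r
      set c := r / a
      have ht : Tendsto (fun n => ENNReal.ofReal (u n * c + v n - v n * Real.exp c)) atTop
          (𝓝 (ENNReal.ofReal (a * c + 0 - 0 * Real.exp c))) :=
        ENNReal.tendsto_ofReal (((hu.mul_const c).add hv).sub (hv.mul_const _))
      have e : a * c + 0 - 0 * Real.exp c = r := by
        simp only [c]; field_simp; ring
      rw [e] at ht
      rw [← ht.liminf_eq]
      exact liminf_le_liminf (Eventually.of_forall fun n => gTerm_dual _ _ _ (hu0 n) (hv0 n))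
    have : liminf (fun n => gTerm (u n) (v n)) atTop = ⊤ := by
      apply ENNReal.eq_top_of_forall_nnreal_le
      intro r
      simpa using key r
    rw [this]; exact le_top
  · have hev : ∀ᶠ n in atTop, v n ≠ 0 := hv.eventually_ne hb
    have ht : Tendsto (fun n => ENNReal.ofReal
        (u n * Real.log (u n) - u n * Real.log (v n) + v n - u n)) atTop
        (𝓝 (ENNReal.ofReal (a * Real.log a - a * Real.log b + b - a))) :=
      ENNReal.tendsto_ofReal (((((Real.continuous_mul_log.tendsto a).comp hu).sub
        (hu.mul (hv.log hb))).add hv).sub hu)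
    have ht' : Tendsto (fun n => gTerm (u n) (v n)) atTop (𝓝 (gTerm a b)) := by
      have e : gTerm a b = ENNReal.ofReal (a * Real.log a - a * Real.log b + b - a) := by
        simp [gTerm, hb]
      rw [e]
      refine ht.congr' (hev.mono fun n hn => ?_)
      simp [gTerm, hn]
    exact ht'.liminf_eq.ge

open Filter in
lemma liminf_add_ge (u v : ℕ → ℝ≥0∞) :
    liminf u atTop + liminf v atTop ≤ liminf (fun n => u n + v n) atTop := by
  simp only [liminf_eq_iSup_iInf_of_nat]
  rw [ENNReal.iSup_add_iSup_of_monotone]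
  · refine iSup_mono fun n => le_iInf₂ fun i hi => ?_
    exact add_le_add (iInf₂_le i hi) (iInf₂_le i hi)
  · exact fun a b hab => le_iInf₂ fun i hi => iInf₂_le i (le_trans hab hi)
  · exact fun a b hab => le_iInf₂ fun i hi => iInf₂_le i (le_trans hab hi)

open Filter in
lemma liminf_sum_ge {ι : Type*} (S : Finset ι) (u : ι → ℕ → ℝ≥0∞) :
    ∑ i ∈ S, liminf (u i) atTop ≤ liminf (fun n => ∑ i ∈ S, u i n) atTop := by
  classical
  induction S using Finset.induction_on with
  | empty => simp
  | insert i S hi ih =>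
    simp only [Finset.sum_insert hi]
    exact (add_le_add le_rfl ih).trans (liminf_add_ge _ _)

open Filter Topology in
lemma relEnt_lsc {X : Type*} [Fintype X] (p q : X → ℝ) (pn qn : ℕ → X → ℝ)
    (hp : IsDist p) (hq : IsDist q) (hpn : ∀ n, IsDist (pn n)) (hqn : ∀ n, IsDist (qn n))
    (hpc : ∀ x, Tendsto (fun n => pn n x) atTop (𝓝 (p x)))
    (hqc : ∀ x, Tendsto (fun n => qn n x) atTop (𝓝 (q x))) :
    relEnt p q ≤ liminf (fun n => relEnt (pn n) (qn n)) atTop := by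
  rw [relEnt_eq_sum p q hp hq]
  simp_rw [fun n => relEnt_eq_sum (pn n) (qn n) (hpn n) (hqn n)]
  refine le_trans (Finset.sum_le_sum fun x _ => ?_) (liminf_sum_ge _ _)
  exact gTerm_lsc _ _ _ _ (fun n => (hpn n).1 x) (fun n => (hqn n).1 x) (hpc x) (hqc x)

lemma IsDist.push {X Y : Type*} [Fintype X] [Fintype Y] {f : Y → X → ℝ} {p : X → ℝ}
    (hf : IsChannel f) (hp : IsDist p) : IsDist (push f p) := by
  refine ⟨fun y => Finset.sum_nonneg fun x _ => mul_nonneg (hf.1 y x) (hp.1 x), ?_⟩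
  unfold _root_.push
  rw [Finset.sum_comm]
  simp_rw [← Finset.sum_mul, hf.2, one_mul, hp.2]

lemma pureCh_isChannel {X Y : Type*} [Fintype Y] [DecidableEq Y] (φ : X → Y) :
    IsChannel (pureCh φ) := by
  refine ⟨fun y x => ?_, fun x => by simp [pureCh]⟩
  unfold pureCh
  split_ifs <;> norm_num

lemma IsChannel.isDist {X Y : Type*} [Fintype Y] {f : Y → X → ℝ}
    (hf : IsChannel f) (x : X) : IsDist (fun y => f y x) :=
  ⟨fun y => hf.1 y x, hf.2 x⟩

lemma IsChannel.comp {X Y Z : Type*} [Fintype Y] [Fintype Z] {g : Z → Y → ℝ} {f : Y → X → ℝ}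
    (hg : IsChannel g) (hf : IsChannel f) : IsChannel (chComp g f) :=
  ⟨fun z x => (IsDist.push hg (hf.isDist x)).1 z, fun x => (IsDist.push hg (hf.isDist x)).2⟩

/-- 2-relative entropy is lower semicontinuous. -/
theorem relEnt2_lowerSemicontinuous {X Y X' Y' : Type*}
    [Fintype X] [Fintype Y] [Fintype X'] [Fintype Y']
    [DecidableEq X'] [DecidableEq Y']
    (μ : X → X') (ν : Y → Y') (f : Y → X → ℝ) (f' : Y' → X' → ℝ)
    (hf : IsChannel f) (hf' : IsChannel f')
    (hcomm : chComp (pureCh ν) f = chComp f' (pureCh μ))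
    (p : X → ℝ) (pn : ℕ → X → ℝ)
    (s : X → X' → ℝ) (sn : ℕ → X → X' → ℝ)
    (t : Y → Y' → ℝ) (tn : ℕ → Y → Y' → ℝ)
    (hp : IsDist p) (hpn : ∀ n, IsDist (pn n))
    (hs : IsSection μ s) (hsn : ∀ n, IsSection μ (sn n))
    (ht : IsSection ν t) (htn : ∀ n, IsSection ν (tn n))
    (hpconv : ∀ x, Filter.Tendsto (fun n => pn n x) Filter.atTop (nhds (p x)))
    (hsconv : ∀ x x', Filter.Tendsto (fun n => sn n x x') Filter.atTop (nhds (s x x')))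
    (htconv : ∀ y y', Filter.Tendsto (fun n => tn n y y') Filter.atTop (nhds (t y y'))) :
    relEnt p (push s (push (pureCh μ) p))
      + (∑ x, ENNReal.ofReal (p x) *
          relEnt (fun y => f y x) (fun y => chComp t (chComp f' (pureCh μ)) y x))
      ≤ Filter.liminf
          (fun n => relEnt (pn n) (push (sn n) (push (pureCh μ) (pn n)))
            + ∑ x, ENNReal.ofReal (pn n x) *
                relEnt (fun y => f y x)
                  (fun y => chComp (tn n) (chComp f' (pureCh μ)) y x))
          Filter.atTop := by
  have hfm := hf'.comp (pureCh_isChannel μ)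
  refine le_trans (add_le_add ?_ (le_trans (Finset.sum_le_sum fun x _ => ?_)
    (liminf_sum_ge _ _))) (liminf_add_ge _ _)
  · refine relEnt_lsc _ _ _ _ hp (IsDist.push hs.1 (IsDist.push (pureCh_isChannel μ) hp)) hpn
      (fun n => IsDist.push (hsn n).1 (IsDist.push (pureCh_isChannel μ) (hpn n))) hpconv ?_
    intro x
    exact tendsto_finsetSum _ fun x' _ => (hsconv x x').mul
      (tendsto_finsetSum _ fun x'' _ => (hpconv x'').const_mul _)
  · have h1 : ENNReal.ofReal (p x) =
        Filter.liminf (fun n => ENNReal.ofReal (pn n x)) Filter.atTop :=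
      (ENNReal.tendsto_ofReal (hpconv x)).liminf_eq.symm
    have h2 := relEnt_lsc (fun y => f y x) (fun y => chComp t (chComp f' (pureCh μ)) y x)
      (fun _ y => f y x) (fun n y => chComp (tn n) (chComp f' (pureCh μ)) y x)
      (hf.isDist x) ((ht.1.comp hfm).isDist x) (fun _ => hf.isDist x)
      (fun n => ((htn n).1.comp hfm).isDist x) (fun _ => tendsto_const_nhds)
      (fun y => tendsto_finsetSum _ fun y' _ => (htconv y y').mul_const _)
    rw [h1]
    refine (mul_le_mul_right h2 _).trans ?_
    exact ENNReal.le_liminf_mul
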